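/- Let k be an algebraically closed field and S = k[x_1,...,x_r]. Suppose D = (p_{ij}) is an 8×8 matrix with entries in S satisfying the standard conditions, and suppose moreover that either: (A) p_{ij} = 0 unless (1 ≤ i ≤ 2 and 3 ≤ j ≤ 8) or (3 ≤ i ≤ 4 and 5 ≤ j ≤ 8) or (5 ≤ i ≤ 7 and j = 8); or (B) p_{ij} = 0 unless (i = 1 and 2 ≤ j ≤ 8) or (2 ≤ i ≤ 4 and 5 ≤ j ≤ 8) or (5 ≤ i ≤ 6 and 7 ≤ j ≤ 8). Then r < 3, i.e., r ≤ 2. -/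

import Mathlib

open MvPolynomial

/-- The "standard conditions" on an `8 × 8` matrix `D = (p_{ij})` with entries in
`S = k[x_1, ..., x_r]`:
(1) `D` is strictly upper triangular;
(2) `D² = 0`;
(3) every entry vanishes at the origin;
(4) for every nonzero point `a ∈ k^r` the evaluated matrix `D(a)` has rank `4`;
(5) there is a nonincreasing `8`-tuple of integers `(d_1, ..., d_8)` such that each `p_{ij}`
is homogeneous of degree `d_i - d_j + 1` (the zero polynomial being homogeneous of
any degree). -/
def StandardConditions {k : Type*} [Field k] {r : ℕ}
    (D : Matrix (Fin 8) (Fin 8) (MvPolynomial (Fin r) k)) : Prop :=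
  (∀ i j : Fin 8, j ≤ i → D i j = 0) ∧
  D * D = 0 ∧
  (∀ i j : Fin 8, eval (0 : Fin r → k) (D i j) = 0) ∧
  (∀ a : Fin r → k, a ≠ 0 → (D.map (eval a)).rank = 4) ∧
  (∃ d : Fin 8 → ℤ, Antitone d ∧
    ∀ i j : Fin 8, D i j = 0 ∨
      (0 ≤ d i - d j + 1 ∧ (D i j).IsHomogeneous (d i - d j + 1).toNat))

/-!
Suppose that the ideal of maximal minors of an `n × (n + 1)` matrix contains a weakly regular
sequence `x, y, z`. Then its Hilbert–Burch complex is exact, and the Koszul relations on `x, y, z`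
lift along it to show that the ideal is the unit ideal. If the matrix has polynomial entries and
drops rank at most at the origin, the Nullstellensatz puts powers of all variables into this ideal;
so in three or more variables such a matrix cannot drop rank exactly at the origin.

A matrix `D` of shape (A) has a last block consisting of one column, and deleting that column costs
at most one from the rank. What remains is `fromBlocks A Y 0 B`, where `A * B = 0` and the inner
dimension is `2`. Over a unique factorization domain `A = 0`, `B = 0`, or
`A = vecMulVec u ![-p 1, p 0]` and `B = vecMulVec p b` for a common vector `p`. In the last case
either `p` vanishes at a nonzero point, where the rank drops, or `p` does not vanish at the origin,
so that `u` and `b` do, and the rank at each point is at most that of the matrix assembled from `u`,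
`Y` and `b`, which vanishes at the origin and has one more column than rows. Shape (B) is shape (A)
for the transpose, with the blocks in reverse order.
-/

section RegularSequence

open RingTheory.Sequence

variable {R : Type*} [CommRing R] {x y z : R} {ι : Type*}

lemma isWeaklyRegular_iff_forall_mem_of_mul_mem {rs : List R} :
    IsWeaklyRegular R rs ↔ ∀ i (h : i < rs.length) (u : R),
      rs[i] * u ∈ Ideal.ofList (rs.take i) → u ∈ Ideal.ofList (rs.take i) := by
  simp only [isWeaklyRegular_iff, isSMulRegular_quotient_iff_mem_of_smul_mem, smul_eq_mul,
    Ideal.mul_top]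

lemma forall_mem_of_isWeaklyRegular_triple (h : IsWeaklyRegular R [x, y, z]) :
    IsSMulRegular R x ∧ (∀ u, x ∣ y * u → x ∣ u) ∧
      ∀ u, z * u ∈ Ideal.span {x, y} → u ∈ Ideal.span {x, y} := by
  have hreg : IsSMulRegular R x := (isWeaklyRegular_cons_iff R x [y, z]).1 h |>.1
  rw [isWeaklyRegular_iff_forall_mem_of_mul_mem] at h
  refine ⟨hreg, ?_, ?_⟩
  · simpa [Ideal.mem_span_singleton] using h 1 (by simp)
  · simpa [Ideal.span_insert] using h 2 (by simp)

lemma exists_eq_smul_of_smul_eq_smul (hxy : ∀ u, x ∣ y * u → x ∣ u) {u v : ι → R}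
    (h : y • u = x • v) : ∃ w : ι → R, u = x • w := by
  choose w hw using fun i ↦ hxy (u i) ⟨v i, congrFun h i⟩
  exact ⟨w, funext hw⟩

lemma exists_eq_smul_add_smul_of_smul_eq
    (hxyz : ∀ u, z * u ∈ Ideal.span {x, y} → u ∈ Ideal.span {x, y}) {u v w : ι → R}
    (h : z • u = x • v + y • w) : ∃ s t : ι → R, u = x • s + y • t := by
  have hu (i : ι) : ∃ s t, s * x + t * y = u i :=
    Ideal.mem_span_pair.1 <| hxyz (u i) <| Ideal.mem_span_pair.2
      ⟨v i, w i, by simpa [mul_comm] using (congrFun h i).symm⟩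
  choose s t hst using hu
  exact ⟨s, t, funext fun i ↦ by simp [← hst, mul_comm]⟩

lemma isWeaklyRegular_map_X_pow {σ : Type*} {l : List σ} (hl : l.Nodup) (K : ℕ) :
    IsWeaklyRegular (MvPolynomial σ R) (l.map fun i ↦ (X i : MvPolynomial σ R) ^ K) := by
  rw [isWeaklyRegular_iff_forall_mem_of_mul_mem]
  intro i hi u hu
  have hspan : Ideal.ofList ((l.map fun i ↦ (X i : MvPolynomial σ R) ^ K).take i) =
      Ideal.span ((fun s ↦ monomial s (1 : R)) '' {s | ∃ j ∈ l.take i, .single j K = s}) := by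
    rw [Ideal.ofList]
    congr 1
    ext p
    simp [X_pow_eq_monomial, ← List.map_take]
  rw [hspan, mem_ideal_span_monomial_image] at hu ⊢
  intro m hm
  rw [List.length_map] at hi
  have hshift : Finsupp.single l[i] K + m ∈
      ((l.map fun i ↦ (X i : MvPolynomial σ R) ^ K)[i] * u).support := by
    rw [List.getElem_map, mem_support_iff, X_pow_eq_monomial, coeff_monomial_mul]
    simpa using hm
  obtain ⟨_, ⟨j, hj, rfl⟩, hle⟩ := hu _ hshift
  have hne : l[i] ≠ j := by
    rintro rfl
    obtain ⟨k, hk, hki⟩ := List.mem_take_iff_getElem.1 hj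
    have := (hl.getElem_inj_iff).1 hki
    omega
  refine ⟨_, ⟨j, hj, rfl⟩, ?_⟩
  rw [Finsupp.single_le_iff] at hle ⊢
  simpa [hne] using hle

end RegularSequence

section SignedMinor

open Matrix

variable {R : Type*} [CommRing R] {n : ℕ}

/-- The `j`-th maximal minor, with sign `(-1) ^ j`, of a matrix with one more column than rows:
the coefficient of `c j` in the determinant of the square matrix obtained by adding `c` on top. -/
def signedMinor (N : Matrix (Fin n) (Fin (n + 1)) R) (j : Fin (n + 1)) : R :=
  (-1) ^ (j : ℕ) * (N.submatrix id j.succAbove).det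

/-- The ideal generated by the maximal minors of a matrix with one more column than rows, i.e.
the zeroth Fitting ideal of its cokernel. -/
def maximalMinorIdeal (N : Matrix (Fin n) (Fin (n + 1)) R) : Ideal R :=
  Ideal.span (Set.range (signedMinor N))

variable (N : Matrix (Fin n) (Fin (n + 1)) R)

lemma map_signedMinor {S : Type*} [CommRing S] (f : R →+* S) (j : Fin (n + 1)) :
    f (signedMinor N j) = signedMinor (N.map f) j := by
  simp [signedMinor, RingHom.map_det, RingHom.mapMatrix_apply, submatrix_map]

lemma det_vecCons (c : Fin (n + 1) → R) :
    (of (vecCons c (of.symm N))).det = c ⬝ᵥ signedMinor N := by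
  rw [det_succ_row_zero, dotProduct]
  refine Finset.sum_congr rfl fun j _ ↦ ?_
  rw [signedMinor, mul_left_comm, mul_assoc]
  rfl

lemma mulVec_signedMinor : N *ᵥ signedMinor N = 0 := by
  ext i
  rw [mulVec, ← det_vecCons]
  exact det_zero_of_row_eq (Fin.succ_ne_zero i).symm rfl

lemma vecMul_dotProduct_signedMinor (l : Fin n → R) : (l ᵥ* N) ⬝ᵥ signedMinor N = 0 := by
  rw [← dotProduct_mulVec, mulVec_signedMinor, dotProduct_zero]

variable {N}

lemma mem_maximalMinorIdeal_iff {x : R} :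
    x ∈ maximalMinorIdeal N ↔ ∃ c, c ⬝ᵥ signedMinor N = x :=
  Ideal.mem_span_range_iff_exists_fun

lemma signedMinor_smul_eq_zero_of_vecMul_eq_zero {l : Fin n → R} (hl : l ᵥ* N = 0)
    (j : Fin (n + 1)) : signedMinor N j • l = 0 := by
  have hsub : l ᵥ* N.submatrix id j.succAbove = 0 := funext fun i ↦ congrFun hl (j.succAbove i)
  have hdet : (N.submatrix id j.succAbove).det • l = 0 := by
    rw [← vecMul_one l, ← vecMul_smul, ← mul_adjugate, ← vecMul_vecMul, hsub, zero_vecMul]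
  rw [signedMinor, mul_smul, hdet, smul_zero]

lemma vecMul_injective_of_mem_maximalMinorIdeal {x : R} (hx : x ∈ maximalMinorIdeal N)
    (hreg : IsSMulRegular R x) : Function.Injective (· ᵥ* N) := by
  intro l l' h
  obtain ⟨c, rfl⟩ := mem_maximalMinorIdeal_iff.1 hx
  have hker : (l - l') ᵥ* N = 0 := by rw [sub_vecMul, sub_eq_zero]; exact h
  have hsmul : (c ⬝ᵥ signedMinor N) • (l - l') = 0 := by
    simp only [dotProduct, Finset.sum_smul, mul_smul,
      signedMinor_smul_eq_zero_of_vecMul_eq_zero hker, smul_zero, Finset.sum_const_zero]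
  rw [smul_sub, sub_eq_zero] at hsmul
  exact funext fun i ↦ hreg (congrFun hsmul i)

lemma exists_vecMul_eq_signedMinor_smul {c : Fin (n + 1) → R} (hc : c ⬝ᵥ signedMinor N = 0)
    (j : Fin (n + 1)) : ∃ l, l ᵥ* N = signedMinor N j • c := by
  set M : Matrix (Fin (n + 1)) (Fin (n + 1)) R := of (vecCons c (of.symm N)) with hM
  have hadj : M.adjugate j ᵥ* M = 0 := by
    have := congrFun (adjugate_mul M) j
    rwa [hM, det_vecCons, hc, zero_smul] at this
  have hcof : vecHead (M.adjugate j) = signedMinor N j := by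
    simp only [vecHead, adjugate_fin_succ_eq_det_submatrix, signedMinor, Fin.val_zero, zero_add]
    rfl
  rw [hM, vecMul_cons, ← hM, hcof] at hadj
  refine ⟨-vecTail (M.adjugate j), ?_⟩
  rw [neg_vecMul]
  exact (eq_neg_of_add_eq_zero_left hadj).symm

lemma exists_vecMul_eq_smul {x : R} (hx : x ∈ maximalMinorIdeal N)
    {c : Fin (n + 1) → R} (hc : c ⬝ᵥ signedMinor N = 0) : ∃ l, l ᵥ* N = x • c := by
  obtain ⟨α, rfl⟩ := mem_maximalMinorIdeal_iff.1 hx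
  choose l hl using exists_vecMul_eq_signedMinor_smul hc
  refine ⟨∑ j, α j • l j, ?_⟩
  simp only [sum_vecMul, smul_vecMul, hl, dotProduct, Finset.sum_smul, smul_smul]

-- Exactness of the Hilbert–Burch complex when the maximal minors contain a regular sequence.
lemma exists_vecMul_eq_of_dotProduct_signedMinor_eq_zero {x y : R}
    (hx : x ∈ maximalMinorIdeal N) (hy : y ∈ maximalMinorIdeal N) (hreg : IsSMulRegular R x)
    (hxy : ∀ u, x ∣ y * u → x ∣ u) {c : Fin (n + 1) → R} (hc : c ⬝ᵥ signedMinor N = 0) :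
    ∃ l, l ᵥ* N = c := by
  obtain ⟨lx, hlx⟩ := exists_vecMul_eq_smul hx hc
  obtain ⟨ly, hly⟩ := exists_vecMul_eq_smul hy hc
  have hcomm : y • lx = x • ly := by
    refine vecMul_injective_of_mem_maximalMinorIdeal hx hreg ?_
    simp only [smul_vecMul, hlx, hly, smul_comm x y c]
  obtain ⟨w, rfl⟩ := exists_eq_smul_of_smul_eq_smul hxy hcomm
  rw [smul_vecMul] at hlx
  exact ⟨w, funext fun i ↦ hreg (congrFun hlx i)⟩

open RingTheory.Sequence in
theorem maximalMinorIdeal_eq_top_of_isWeaklyRegular {x y z : R}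
    (hx : x ∈ maximalMinorIdeal N) (hy : y ∈ maximalMinorIdeal N) (hz : z ∈ maximalMinorIdeal N)
    (hxyz : IsWeaklyRegular R [x, y, z]) : maximalMinorIdeal N = ⊤ := by
  obtain ⟨hregx, hregy, hregz⟩ := forall_mem_of_isWeaklyRegular_triple hxyz
  have hexact {c} (hc : c ⬝ᵥ signedMinor N = 0) : ∃ l, l ᵥ* N = c :=
    exists_vecMul_eq_of_dotProduct_signedMinor_eq_zero hx hy hregx hregy hc
  obtain ⟨α, hα⟩ := mem_maximalMinorIdeal_iff.1 hx
  obtain ⟨β, hβ⟩ := mem_maximalMinorIdeal_iff.1 hy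
  obtain ⟨γ, hγ⟩ := mem_maximalMinorIdeal_iff.1 hz
  obtain ⟨lxy, hlxy⟩ := hexact (c := x • β - y • α) (by simp [hα, hβ, mul_comm])
  obtain ⟨lxz, hlxz⟩ := hexact (c := x • γ - z • α) (by simp [hα, hγ, mul_comm])
  obtain ⟨lyz, hlyz⟩ := hexact (c := y • γ - z • β) (by simp [hβ, hγ, mul_comm])
  have hcocycle : z • lxy = x • -lyz + y • lxz := by
    refine vecMul_injective_of_mem_maximalMinorIdeal hx hregx ?_
    simp only [add_vecMul, smul_vecMul, neg_vecMul, hlxy, hlxz, hlyz]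
    module
  obtain ⟨s, t, rfl⟩ := exists_eq_smul_add_smul_of_smul_eq hregz hcocycle
  have hdiv : y • (α + t ᵥ* N) = x • (β - s ᵥ* N) := by
    rw [add_vecMul, smul_vecMul, smul_vecMul] at hlxy
    linear_combination (norm := module) hlxy
  obtain ⟨δ, hδ⟩ := exists_eq_smul_of_smul_eq_smul hregy hdiv
  have hone : δ ⬝ᵥ signedMinor N = 1 := by
    refine hregx ?_
    change x • (δ ⬝ᵥ signedMinor N) = x • 1
    rw [← smul_dotProduct, ← hδ, add_dotProduct, vecMul_dotProduct_signedMinor, add_zero, hα,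
      smul_eq_mul, mul_one]
  exact (Ideal.eq_top_iff_one _).2 (mem_maximalMinorIdeal_iff.2 ⟨δ, hone⟩)

end SignedMinor

section Rank

open Matrix

variable {K : Type*} [Field K]

lemma rank_lt_iff_signedMinor_eq_zero {n : ℕ} {N : Matrix (Fin n) (Fin (n + 1)) K} :
    N.rank < n ↔ signedMinor N = 0 := by
  have hrank : N.rank < n ↔ ¬LinearIndependent K N.row := by
    rw [linearIndependent_iff_card_le_finrank_span, Set.finrank, ← rank_eq_finrank_span_row,
      Fintype.card_fin, not_le]
  have hext (c : Fin (n + 1) → K) : c ⬝ᵥ signedMinor N ≠ 0 ↔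
      LinearIndependent K N.row ∧ c ∉ Submodule.span K (Set.range N.row) := by
    rw [← det_vecCons, ← isUnit_iff_ne_zero, ← isUnit_iff_isUnit_det,
      ← linearIndependent_rows_iff_isUnit]
    exact linearIndependent_finCons
  rw [hrank, ← dotProduct_eq_zero_iff]
  simp only [dotProduct_comm (signedMinor N)]
  refine ⟨fun h c ↦ ?_, fun h hli ↦ ?_⟩
  · exact not_not.1 fun hc ↦ h ((hext c).1 hc).1
  · obtain ⟨c, hc⟩ : ∃ c, c ∉ Submodule.span K (Set.range N.row) := by
      by_contra! hall
      have := hli.rank_matrix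
      rw [rank_eq_finrank_span_row, (Submodule.eq_top_iff').2 hall, finrank_top,
        Module.finrank_fin_fun, Fintype.card_fin] at this
      omega
    exact (hext c).2 ⟨hli, hc⟩ (h c)

variable {m n ι κ : Type*} [Fintype n]

lemma rank_add_le_rank_add_rank (M N : Matrix m n K) :
    (M + N).rank ≤ M.rank + N.rank := by
  rw [rank, mulVecLin_add]
  exact (Submodule.finrank_mono (LinearMap.range_add_le _ _)).trans
    (Submodule.finrank_add_le_finrank_add_finrank _ _)

lemma rank_le_rank_updateCol_zero_add_one [DecidableEq n] (M : Matrix m n K) (j : n) :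
    M.rank ≤ (M.updateCol j 0).rank + 1 := by
  have hM : M = M.updateCol j 0 + vecMulVec (M.col j) (Pi.single j 1) := by
    ext i l
    obtain rfl | hl := eq_or_ne l j
    · simp [vecMulVec_apply]
    · simp [vecMulVec_apply, hl]
  calc M.rank = (M.updateCol j 0 + vecMulVec (M.col j) (Pi.single j 1)).rank := congrArg rank hM
    _ ≤ (M.updateCol j 0).rank + (vecMulVec (M.col j) (Pi.single j 1)).rank :=
      rank_add_le_rank_add_rank _ _
    _ ≤ (M.updateCol j 0).rank + 1 := by gcongr; exact rank_vecMulVec_le _ _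

lemma rank_le_rank_submatrix [Finite ι] [Fintype κ] {M : Matrix m n K} {f : ι → m} {g : κ → n}
    (hf : f.Injective) (hg : g.Injective)
    (hM : ∀ i j, M i j ≠ 0 → i ∈ Set.range f ∧ j ∈ Set.range g) :
    M.rank ≤ (M.submatrix f g).rank := by
  classical
  have := Fintype.ofFinite ι
  have hfactor : M = (1 : Matrix m m K).submatrix id f * M.submatrix f g *
      (1 : Matrix n n K).submatrix g id := by
    ext i j
    simp only [mul_apply, submatrix_apply, id_eq, one_apply, ite_mul, mul_ite, one_mul, mul_one,
      zero_mul, mul_zero]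
    by_cases h : i ∈ Set.range f ∧ j ∈ Set.range g
    · obtain ⟨⟨a, rfl⟩, b, rfl⟩ := h
      simp [hf.eq_iff, hg.eq_iff]
    · rw [not_not.1 (mt (hM i j) h), eq_comm]
      refine Finset.sum_eq_zero fun b _ ↦ ?_
      split_ifs with hb
      · refine Finset.sum_eq_zero fun a _ ↦ ?_
        split_ifs with ha
        · exact absurd ⟨⟨a, ha.symm⟩, b, hb⟩ h
        · rfl
      · rfl
  exact (congrArg rank hfactor).trans_le ((rank_mul_le_left _ _).trans (rank_mul_le_right _ _))

end Rank

section RankDrop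

open Matrix

variable {k σ ι κ : Type*} [Field k] [Fintype ι] [Fintype κ]

lemma mem_zeroLocus_maximalMinorIdeal_iff {n : ℕ}
    {N : Matrix (Fin n) (Fin (n + 1)) (MvPolynomial σ k)} {a : σ → k} :
    a ∈ zeroLocus k (maximalMinorIdeal N) ↔ (N.map (eval a)).rank < n := by
  rw [rank_lt_iff_signedMinor_eq_zero, maximalMinorIdeal, zeroLocus_span]
  simp [funext_iff, ← map_signedMinor, aeval_eq_eval]

variable [IsAlgClosed k]

lemma exists_X_pow_mem_of_zeroLocus_subset [Finite σ] {I : Ideal (MvPolynomial σ k)}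
    (hI : zeroLocus k I ⊆ {0}) : ∃ K, ∀ i, X i ^ K ∈ I := by
  obtain ⟨K, hK⟩ := I.exists_radical_pow_le_of_fg (IsNoetherian.noetherian _)
  refine ⟨K, fun i ↦ hK (Ideal.pow_mem_pow ?_ K)⟩
  rw [← vanishingIdeal_zeroLocus_eq_radical (K := k), mem_vanishingIdeal_iff]
  intro a ha
  simp [Set.mem_singleton_iff.1 (hI ha)]

variable [Fintype σ]

lemma exists_rank_lt_of_rank_zero_lt {n : ℕ} (hσ : 2 < Fintype.card σ)
    {N : Matrix (Fin n) (Fin (n + 1)) (MvPolynomial σ k)} (h0 : (N.map (eval 0)).rank < n) :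
    ∃ a ≠ 0, (N.map (eval a)).rank < n := by
  by_contra! hN
  have hlocus : zeroLocus k (maximalMinorIdeal N) ⊆ {0} := fun a ha ↦
    of_not_not fun hne ↦ (hN a hne).not_gt (mem_zeroLocus_maximalMinorIdeal_iff.1 ha)
  obtain ⟨K, hK⟩ := exists_X_pow_mem_of_zeroLocus_subset hlocus
  obtain ⟨i, j, l, hij, hil, hjl⟩ := Fintype.two_lt_card_iff.1 hσ
  have htop : maximalMinorIdeal N = ⊤ :=
    maximalMinorIdeal_eq_top_of_isWeaklyRegular (hK i) (hK j) (hK l) <|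
      isWeaklyRegular_map_X_pow (l := [i, j, l]) (by simp [hij, hil, hjl]) K
  have hmem : (0 : σ → k) ∈ zeroLocus k (maximalMinorIdeal N) :=
    mem_zeroLocus_maximalMinorIdeal_iff.2 h0
  simp [htop, zeroLocus_top] at hmem

theorem exists_rank_lt_of_card_eq_card_add_one (hσ : 2 < Fintype.card σ)
    (hcard : Fintype.card κ = Fintype.card ι + 1) {N : Matrix ι κ (MvPolynomial σ k)}
    (h0 : (N.map (eval 0)).rank < Fintype.card ι) :
    ∃ a ≠ 0, (N.map (eval a)).rank < Fintype.card ι := by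
  have hrank (a : σ → k) : ((N.submatrix (Fintype.equivFin ι).symm
      (Fintype.equivFinOfCardEq hcard).symm).map (eval a)).rank = (N.map (eval a)).rank := by
    rw [← submatrix_map, rank_submatrix]
  simp only [← hrank] at h0 ⊢
  exact exists_rank_lt_of_rank_zero_lt hσ h0

end RankDrop

section RankOne

open Matrix

variable {R m n : Type*} [CommRing R]

lemma eq_zero_or_eq_zero_of_vecMulVec_eq_zero [IsDomain R] {u : m → R} {v : n → R}
    (h : vecMulVec u v = 0) : u = 0 ∨ v = 0 := by
  simpa only [← Matrix.ext_iff, vecMulVec_apply, Matrix.zero_apply, mul_eq_zero, forall_or_left,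
    forall_or_right, _root_.funext_iff, Pi.zero_apply] using h

lemma exists_eq_smul_of_dotProduct_eq_zero [IsDomain R] [DecompositionMonoid R] {p q : Fin 2 → R}
    (hp : IsRelPrime (p 0) (p 1)) (h : q ⬝ᵥ p = 0) : ∃ t : R, q = t • ![-p 1, p 0] := by
  rw [dotProduct, Fin.sum_univ_two] at h
  obtain ⟨t, ht⟩ : p 0 ∣ q 1 := hp.dvd_of_dvd_mul_right ⟨-q 0, by linear_combination h⟩
  obtain ⟨s, hs⟩ : p 1 ∣ q 0 := hp.symm.dvd_of_dvd_mul_right ⟨-q 1, by linear_combination h⟩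
  by_cases h0 : p 0 = 0
  · exact ⟨-s, funext <| Fin.forall_fin_two.2 ⟨by simp [hs, mul_comm], by simp [ht, h0]⟩⟩
  · have hq0 : q 0 = -(t * p 1) :=
      mul_left_cancel₀ h0 (by linear_combination h - p 1 * ht)
    exact ⟨t, funext <| Fin.forall_fin_two.2 ⟨by simp [hq0], by simp [ht, mul_comm]⟩⟩

lemma exists_isRelPrime_eq_smul [UniqueFactorizationMonoid R] {w : Fin 2 → R} (hw : w ≠ 0) :
    ∃ (g : R) (p : Fin 2 → R), IsRelPrime (p 0) (p 1) ∧ w = g • p := by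
  have hw' : w 0 ≠ 0 ∨ w 1 ≠ 0 := by
    contrapose! hw
    exact funext (Fin.forall_fin_two.2 hw)
  obtain ⟨p₀, p₁, g, hp, h₀, h₁⟩ : ∃ p₀ p₁ g, IsRelPrime p₀ p₁ ∧ g * p₀ = w 0 ∧ g * p₁ = w 1 :=
    hw'.elim (UniqueFactorizationMonoid.exists_reduced_factors _ · _)
      (UniqueFactorizationMonoid.exists_reduced_factors' _ _)
  exact ⟨g, ![p₀, p₁], hp, funext (Fin.forall_fin_two.2 ⟨h₀.symm, h₁.symm⟩)⟩

theorem exists_eq_vecMulVec_of_mul_eq_zero [IsDomain R] [UniqueFactorizationMonoid R]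
    {A : Matrix m (Fin 2) R} {B : Matrix (Fin 2) n R} (hAB : A * B = 0) (hA : A ≠ 0) (hB : B ≠ 0) :
    ∃ (u : m → R) (p : Fin 2 → R) (b : n → R),
      A = vecMulVec u ![-p 1, p 0] ∧ B = vecMulVec p b := by
  have horth (i : m) (j : n) : A i ⬝ᵥ B.col j = 0 := congrFun (congrFun hAB i) j
  obtain ⟨j, hj⟩ : ∃ j, B.col j ≠ 0 := by
    contrapose! hB
    exact ext_col hB
  obtain ⟨g, p, hp, hg⟩ := exists_isRelPrime_eq_smul hj
  have hrow (i : m) : ∃ t : R, A i = t • ![-p 1, p 0] := by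
    refine exists_eq_smul_of_dotProduct_eq_zero hp ?_
    have hg0 : g ≠ 0 := by
      rintro rfl
      exact hj (hg.trans (zero_smul _ _))
    simpa [hg, hg0] using horth i j
  choose u hu using hrow
  obtain ⟨i, hi⟩ : ∃ i, u i ≠ 0 := by
    contrapose! hA
    exact funext fun i ↦ by rw [hu, hA, zero_smul]; rfl
  have hcol (l : n) : ∃ t : R, B.col l = t • p := by
    have hl : B.col l ⬝ᵥ ![-p 1, p 0] = 0 := by
      have := horth i l
      rw [hu, smul_dotProduct, smul_eq_zero_iff_right hi, dotProduct_comm] at this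
      exact this
    obtain ⟨t, ht⟩ := exists_eq_smul_of_dotProduct_eq_zero (by simpa using hp.symm.neg_left) hl
    exact ⟨-t, by rw [ht]; ext s; fin_cases s <;> simp⟩
  choose b hb using hcol
  refine ⟨u, p, b, funext hu, ext_col fun l ↦ ?_⟩
  rw [hb]
  ext s
  simp [vecMulVec_apply, mul_comm]

end RankOne

section FromBlocks

open Matrix

variable {K ι κ μ : Type*} [Field K] [Fintype κ] [Fintype μ]

lemma rank_fromBlocks_zero_zero_le [Fintype ι] (A : Matrix ι μ K) (Y : Matrix ι κ K) :
    (fromBlocks A Y (0 : Matrix μ μ K) 0).rank ≤ Fintype.card ι := by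
  classical
  have hfactor : fromBlocks A Y (0 : Matrix μ μ K) 0 =
      fromRows (1 : Matrix ι ι K) (0 : Matrix μ ι K) * fromCols A Y := by
    rw [fromRows_mul, Matrix.one_mul, Matrix.zero_mul, ← fromRows_fromCols_eq_fromBlocks,
      fromCols_zero]
  rw [hfactor]
  exact (rank_mul_le_right _ _).trans (rank_le_card_height _)

lemma rank_fromBlocks_zero_left_le (Y : Matrix ι κ K) (B : Matrix μ κ K) :
    (fromBlocks (0 : Matrix ι μ K) Y 0 B).rank ≤ (fromRows Y B).rank := by
  classical
  have hfactor : fromBlocks (0 : Matrix ι μ K) Y 0 B =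
      fromRows Y B * fromCols (0 : Matrix κ μ K) 1 := by
    rw [mul_fromCols, Matrix.mul_one, Matrix.mul_zero]
    ext (_ | _) (_ | _) <;> simp
  rw [hfactor]
  exact rank_mul_le_left _ _

lemma rank_fromBlocks_vecMulVec_le [Finite ι] (u : ι → K) (v w : μ → K) (b : κ → K)
    (Y : Matrix ι κ K) :
    (fromBlocks (vecMulVec u v) Y 0 (vecMulVec w b)).rank ≤
      (fromBlocks (replicateCol Unit u) Y 0 (replicateRow Unit b)).rank := by
  classical
  have := Fintype.ofFinite ι
  have hfactor : fromBlocks (vecMulVec u v) Y 0 (vecMulVec w b) =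
      fromBlocks (1 : Matrix ι ι K) 0 0 (replicateCol Unit w) *
        fromBlocks (replicateCol Unit u) Y 0 (replicateRow Unit b) *
        fromBlocks (replicateRow Unit v) 0 0 (1 : Matrix κ κ K) := by
    simp [fromBlocks_multiply, vecMulVec_eq Unit]
  rw [hfactor]
  exact (rank_mul_le_left _ _).trans (rank_mul_le_right _ _)

variable {k σ : Type*} [Field k] [IsAlgClosed k] [Fintype σ] [Fintype ι]

lemma exists_eval_eq_zero_of_eval_zero_eq_zero (hσ : 2 < Fintype.card σ)
    {p : Fin 2 → MvPolynomial σ k} (h0 : eval 0 ∘ p = 0) : ∃ a ≠ 0, eval a ∘ p = 0 := by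
  have hp (a : σ → k) : ((replicateRow (Fin 1) p).map (eval a)).rank < 1 ↔ eval a ∘ p = 0 := by
    rw [rank_lt_iff_signedMinor_eq_zero]
    simp [funext_iff, Fin.forall_fin_two, signedMinor, and_comm]
  simp only [← hp] at h0 ⊢
  exact exists_rank_lt_of_rank_zero_lt hσ h0

lemma exists_rank_fromBlocks_vecMulVec_lt (hσ : 2 < Fintype.card σ)
    (hcard : Fintype.card κ = Fintype.card ι + 1) {u : ι → MvPolynomial σ k}
    {p : Fin 2 → MvPolynomial σ k} {b : κ → MvPolynomial σ k} {Y : Matrix ι κ (MvPolynomial σ k)}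
    (h0 : (fromBlocks (vecMulVec u ![-p 1, p 0]) Y 0 (vecMulVec p b)).map (eval 0) = 0) :
    ∃ a ≠ 0, ((fromBlocks (vecMulVec u ![-p 1, p 0]) Y 0 (vecMulVec p b)).map (eval a)).rank <
      Fintype.card κ := by
  have hmap (a : σ → k) (v w : Fin 2 → MvPolynomial σ k) :
      (fromBlocks (vecMulVec u v) Y 0 (vecMulVec w b)).map (eval a) =
        fromBlocks (vecMulVec (eval a ∘ u) (eval a ∘ v)) (Y.map (eval a)) 0
          (vecMulVec (eval a ∘ w) (eval a ∘ b)) := by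
    ext (i | i) (j | j) <;> simp [vecMulVec_apply]
  by_cases hp : ∃ a ≠ 0, eval a ∘ p = 0
  · obtain ⟨a, ha, hpa⟩ := hp
    refine ⟨a, ha, ?_⟩
    rw [hmap, hpa, zero_vecMulVec, hcard, Nat.lt_succ_iff]
    exact rank_fromBlocks_zero_zero_le _ _
  have hp0 : eval 0 ∘ p ≠ 0 := mt (exists_eval_eq_zero_of_eval_zero_eq_zero hσ) hp
  rw [hmap, ← fromBlocks_zero, fromBlocks_inj] at h0
  have hq0 : eval 0 ∘ ![-p 1, p 0] ≠ 0 := by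
    contrapose! hp0
    simpa [funext_iff, Fin.forall_fin_two, and_comm] using hp0
  have hu0 : eval 0 ∘ u = 0 := (eq_zero_or_eq_zero_of_vecMulVec_eq_zero h0.1).resolve_right hq0
  have hb0 : eval 0 ∘ b = 0 :=
    (eq_zero_or_eq_zero_of_vecMulVec_eq_zero h0.2.2.2).resolve_left hp0
  have hmapN (a : σ → k) :
      (fromBlocks (replicateCol Unit u) Y 0 (replicateRow Unit b)).map (eval a) =
        fromBlocks (replicateCol Unit (eval a ∘ u)) (Y.map (eval a)) 0
          (replicateRow Unit (eval a ∘ b)) := by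
    ext (i | i) (j | j) <;> simp
  have hN0 : (fromBlocks (replicateCol Unit u) Y 0 (replicateRow Unit b)).map (eval 0) = 0 := by
    rw [hmapN, hu0, hb0, h0.2.1, replicateCol_zero, replicateRow_zero, fromBlocks_zero]
  obtain ⟨a, ha, hlt⟩ := exists_rank_lt_of_card_eq_card_add_one hσ (by simp [hcard, add_comm])
    (N := fromBlocks (replicateCol Unit u) Y 0 (replicateRow Unit b)) (by rw [hN0]; simp)
  refine ⟨a, ha, ?_⟩
  rw [hmapN, Fintype.card_sum, Fintype.card_unit, ← hcard] at hlt
  rw [hmap]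
  exact (rank_fromBlocks_vecMulVec_le _ _ _ _ _).trans_lt hlt

theorem exists_rank_fromBlocks_lt (hσ : 2 < Fintype.card σ)
    (hcard : Fintype.card κ = Fintype.card ι + 1) {A : Matrix ι (Fin 2) (MvPolynomial σ k)}
    {Y : Matrix ι κ (MvPolynomial σ k)} {B : Matrix (Fin 2) κ (MvPolynomial σ k)}
    (hAB : A * B = 0) (h0 : (fromBlocks A Y 0 B).map (eval 0) = 0) :
    ∃ a ≠ 0, ((fromBlocks A Y 0 B).map (eval a)).rank < Fintype.card κ := by
  have : Nonempty σ := Fintype.card_pos_iff.1 (by omega)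
  by_cases hB : B = 0
  · obtain ⟨a, ha⟩ := exists_ne (0 : σ → k)
    refine ⟨a, ha, ?_⟩
    rw [hB, fromBlocks_map]
    simp only [map_zero, Matrix.map_zero]
    have := rank_fromBlocks_zero_zero_le (A.map (eval a)) (Y.map (eval a))
    omega
  by_cases hA : A = 0
  · subst hA
    have hmap (a : σ → k) : (fromBlocks 0 Y 0 B).map (eval a) =
        fromBlocks (0 : Matrix ι (Fin 2) k) (Y.map (eval a)) 0 (B.map (eval a)) := by
      simp [fromBlocks_map]
    rw [hmap, ← fromBlocks_zero, fromBlocks_inj] at h0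
    have hN0 : (fromRows Y B)ᵀ.map (eval 0) = 0 := by
      rw [transpose_map, fromRows_map, h0.2.1, h0.2.2.2, fromRows_zero, transpose_zero]
    obtain ⟨a, ha, hlt⟩ := exists_rank_lt_of_card_eq_card_add_one hσ (by simp [hcard])
      (N := (fromRows Y B)ᵀ) (by rw [hN0, rank_zero]; omega)
    refine ⟨a, ha, ?_⟩
    rw [hmap]
    refine (rank_fromBlocks_zero_left_le _ _).trans_lt ?_
    rwa [transpose_map, rank_transpose, fromRows_map] at hlt
  obtain ⟨u, p, b, rfl, rfl⟩ := exists_eq_vecMulVec_of_mul_eq_zero hAB hA hB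
  exact exists_rank_fromBlocks_vecMulVec_lt hσ hcard h0

theorem exists_rank_fromBlocks_lt_of_card_eq_two (hσ : 2 < Fintype.card σ)
    (hcard : Fintype.card κ = Fintype.card ι + 1) (hμ : Fintype.card μ = 2)
    {A : Matrix ι μ (MvPolynomial σ k)} {Y : Matrix ι κ (MvPolynomial σ k)}
    {B : Matrix μ κ (MvPolynomial σ k)} (hAB : A * B = 0)
    (h0 : (fromBlocks A Y 0 B).map (eval 0) = 0) :
    ∃ a ≠ 0, ((fromBlocks A Y 0 B).map (eval a)).rank < Fintype.card κ := by
  let e : Fin 2 ≃ μ := (Fintype.equivFinOfCardEq hμ).symm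
  have hreindex : fromBlocks (A.submatrix id e) Y 0 (B.submatrix e id) =
      (fromBlocks A Y 0 B).submatrix ((Equiv.refl ι).sumCongr e) (e.sumCongr (Equiv.refl κ)) := by
    ext (i | i) (j | j) <;> rfl
  have hAB' : A.submatrix id e * B.submatrix e id = 0 := by
    rw [submatrix_mul_equiv, hAB, submatrix_zero, Pi.zero_apply, Pi.zero_apply]
  obtain ⟨a, ha, hlt⟩ := exists_rank_fromBlocks_lt hσ hcard hAB' (Y := Y)
    (by rw [hreindex, ← submatrix_map, h0, submatrix_zero, Pi.zero_apply, Pi.zero_apply])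
  rw [hreindex, ← submatrix_map, rank_submatrix] at hlt
  exact ⟨a, ha, hlt⟩

end FromBlocks

section StrictlyBlockTriangular

open Matrix

variable {m α R : Type*}

/-- A square matrix is strictly block upper triangular with respect to the block labelling `b` if
its nonzero entries lie above the diagonal blocks. This is `Matrix.BlockTriangular` with the
diagonal blocks also required to vanish. -/
def IsStrictlyBlockTriangular [LE α] [Zero R] (b : m → α) (M : Matrix m m R) : Prop :=
  ∀ i j, b j ≤ b i → M i j = 0

lemma IsStrictlyBlockTriangular.transpose [Zero R] {n : ℕ} {b : m → Fin n} {M : Matrix m m R}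
    (hM : IsStrictlyBlockTriangular b M) : IsStrictlyBlockTriangular (Fin.rev ∘ b) Mᵀ :=
  fun i j hij ↦ hM j i (Fin.rev_le_rev.1 hij)

variable [Fintype m] {b : m → Fin 4}

lemma rank_le_rank_submatrix_add_one_of_isStrictlyBlockTriangular {K ι κ : Type*} [Field K]
    [Finite ι] [Fintype κ] {M : Matrix m m K} (hM : IsStrictlyBlockTriangular b M)
    (hb : Fintype.card {i // b i = 3} = 1) {f : ι → m} {g : κ → m} (hf : f.Injective)
    (hg : g.Injective) (hfb : ∀ i, b i < 2 → i ∈ Set.range f)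
    (hgb : ∀ j, j ∈ Set.range g ↔ b j = 1 ∨ b j = 2) :
    M.rank ≤ (M.submatrix f g).rank + 1 := by
  classical
  obtain ⟨⟨l, hl⟩, hlast⟩ := Fintype.card_eq_one_iff.1 hb
  have hsub : (M.updateCol l 0).submatrix f g = M.submatrix f g := by
    ext i j
    have hne : g j ≠ l := by
      intro h
      have := (hgb _).1 ⟨j, h⟩
      simp [hl] at this
    rw [submatrix_apply, updateCol_ne hne, submatrix_apply]
  have hsupport (i j) (hij : M.updateCol l 0 i j ≠ 0) : i ∈ Set.range f ∧ j ∈ Set.range g := by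
    have hjl : j ≠ l := by
      rintro rfl
      simp at hij
    rw [updateCol_ne hjl] at hij
    have hlt : b i < b j := not_le.1 (mt (hM i j) hij)
    have hj : b j ≠ 3 := fun h ↦ hjl (congrArg Subtype.val (hlast ⟨j, h⟩))
    exact ⟨hfb i (by omega), (hgb j).2 (by omega)⟩
  calc M.rank ≤ (M.updateCol l 0).rank + 1 := rank_le_rank_updateCol_zero_add_one M l
    _ ≤ ((M.updateCol l 0).submatrix f g).rank + 1 := by
      gcongr
      exact rank_le_rank_submatrix hf hg hsupport
    _ = (M.submatrix f g).rank + 1 := by rw [hsub]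

lemma rank_le_rank_fromBlocks_add_one_of_isStrictlyBlockTriangular {K : Type*} [Field K]
    {M : Matrix m m K} (hM : IsStrictlyBlockTriangular b M)
    (hb : Fintype.card {i // b i = 3} = 1) :
    M.rank ≤ (fromBlocks (M.toBlock (b · = 0) (b · = 1)) (M.toBlock (b · = 0) (b · = 2))
      0 (M.toBlock (b · = 1) (b · = 2))).rank + 1 := by
  let f : {i // b i = 0} ⊕ {i // b i = 1} → m := Sum.elim (↑) (↑)
  let g : {j // b j = 1} ⊕ {j // b j = 2} → m := Sum.elim (↑) (↑)
  have hf : f.Injective := Subtype.val_injective.sumElim Subtype.val_injective fun i j h ↦ by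
    simpa [i.2, j.2] using congrArg b h
  have hg : g.Injective := Subtype.val_injective.sumElim Subtype.val_injective fun i j h ↦ by
    simpa [i.2, j.2] using congrArg b h
  have hfb (i : m) (hi : b i < 2) : i ∈ Set.range f := by
    have : b i = 0 ∨ b i = 1 := by omega
    simpa [f] using this
  have hgb (j : m) : j ∈ Set.range g ↔ b j = 1 ∨ b j = 2 := by
    simp [g]
  have hblocks : M.submatrix f g = fromBlocks (M.toBlock (b · = 0) (b · = 1))
      (M.toBlock (b · = 0) (b · = 2)) 0 (M.toBlock (b · = 1) (b · = 2)) := by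
    ext (i | i) (j | j)
    · rfl
    · rfl
    · exact hM i j (j.2.trans i.2.symm).le
    · rfl
  rw [← hblocks]
  exact rank_le_rank_submatrix_add_one_of_isStrictlyBlockTriangular hM hb hf hg hfb hgb

lemma toBlock_mul_toBlock_eq_zero_of_isStrictlyBlockTriangular [CommRing R] {M : Matrix m m R}
    (hM : IsStrictlyBlockTriangular b M) (hsq : M * M = 0) :
    M.toBlock (b · = 0) (b · = 1) * M.toBlock (b · = 1) (b · = 2) = 0 := by
  have hzero : M.toBlock (b · = 0) (fun l ↦ ¬b l = 1) * M.toBlock (fun l ↦ ¬b l = 1) (b · = 2) =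
      0 := by
    ext ⟨i, hi⟩ ⟨j, hj⟩
    refine Finset.sum_eq_zero fun l _ ↦ ?_
    obtain h | h : b l ≤ b i ∨ b j ≤ b l := by have := l.2; omega
    · exact mul_eq_zero_of_left (hM i l h) _
    · exact mul_eq_zero_of_right _ (hM l j h)
  have hadd := toBlock_mul_eq_add (b · = 0) (b · = 1) (b · = 2) M M
  rwa [hsq, hzero, add_zero, eq_comm] at hadd

variable {k σ : Type*} [Field k] [IsAlgClosed k] [Fintype σ]

theorem exists_rank_le_of_isStrictlyBlockTriangular (hσ : 2 < Fintype.card σ)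
    {D : Matrix m m (MvPolynomial σ k)} (hD : IsStrictlyBlockTriangular b D)
    (hsq : D * D = 0) (h0 : D.map (eval 0) = 0) (hb₁ : Fintype.card {i // b i = 1} = 2)
    (hb₂ : Fintype.card {i // b i = 2} = Fintype.card {i // b i = 0} + 1)
    (hb₃ : Fintype.card {i // b i = 3} = 1) :
    ∃ a ≠ 0, (D.map (eval a)).rank ≤ Fintype.card {i // b i = 2} := by
  have hblocks (a : σ → k) : (fromBlocks (D.toBlock (b · = 0) (b · = 1))
      (D.toBlock (b · = 0) (b · = 2)) 0 (D.toBlock (b · = 1) (b · = 2))).map (eval a) =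
      fromBlocks ((D.map (eval a)).toBlock (b · = 0) (b · = 1))
        ((D.map (eval a)).toBlock (b · = 0) (b · = 2)) 0
        ((D.map (eval a)).toBlock (b · = 1) (b · = 2)) := by
    rw [fromBlocks_map, Matrix.map_zero _ (map_zero _)]
    rfl
  obtain ⟨a, ha, hlt⟩ := exists_rank_fromBlocks_lt_of_card_eq_two hσ hb₂ hb₁
    (toBlock_mul_toBlock_eq_zero_of_isStrictlyBlockTriangular hD hsq)
    (by rw [hblocks, h0]; exact fromBlocks_zero)
  have hDa : IsStrictlyBlockTriangular b (D.map (eval a)) := fun i j hij ↦ by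
    rw [map_apply, hD i j hij, map_zero]
  rw [hblocks] at hlt
  exact ⟨a, ha, (rank_le_rank_fromBlocks_add_one_of_isStrictlyBlockTriangular hDa hb₃).trans hlt⟩

theorem statement_4_general (D : Matrix (Fin 8) (Fin 8) (MvPolynomial σ k)) (hsq : D * D = 0)
    (h0 : D.map (eval 0) = 0) (hrank : ∀ a ≠ 0, 4 ≤ (D.map (eval a)).rank)
    (hD : IsStrictlyBlockTriangular ![0, 0, 1, 1, 2, 2, 2, (3 : Fin 4)] D ∨
      IsStrictlyBlockTriangular ![0, 1, 1, 1, 2, 2, 3, (3 : Fin 4)] D) :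
    Fintype.card σ < 3 := by
  by_contra! hσ
  obtain ⟨a, ha, hle⟩ : ∃ a ≠ 0, (D.map (eval a)).rank ≤ 3 := by
    obtain hD | hD := hD
    · exact exists_rank_le_of_isStrictlyBlockTriangular hσ hD hsq h0 rfl rfl rfl
    · have hsqT : Dᵀ * Dᵀ = 0 := by rw [← transpose_mul, hsq, transpose_zero]
      have h0T : Dᵀ.map (eval 0) = 0 := by rw [transpose_map, h0, transpose_zero]
      simpa only [transpose_map, rank_transpose] using!
        exists_rank_le_of_isStrictlyBlockTriangular hσ hD.transpose hsqT h0T rfl rfl rfl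
  exact absurd (hrank a ha) (by omega)

end StrictlyBlockTriangular

theorem statement_4 {k : Type*} [Field k] [IsAlgClosed k] {r : ℕ}
    (D : Matrix (Fin 8) (Fin 8) (MvPolynomial (Fin r) k))
    (hstd : StandardConditions D)
    (hzero : (∀ i j : Fin 8,
        ¬((1 ≤ (i : ℕ) + 1 ∧ (i : ℕ) + 1 ≤ 2 ∧ 3 ≤ (j : ℕ) + 1 ∧ (j : ℕ) + 1 ≤ 8) ∨
          (3 ≤ (i : ℕ) + 1 ∧ (i : ℕ) + 1 ≤ 4 ∧ 5 ≤ (j : ℕ) + 1 ∧ (j : ℕ) + 1 ≤ 8) ∨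
          (5 ≤ (i : ℕ) + 1 ∧ (i : ℕ) + 1 ≤ 7 ∧ 8 ≤ (j : ℕ) + 1 ∧ (j : ℕ) + 1 ≤ 8)) →
        D i j = 0) ∨
      (∀ i j : Fin 8,
        ¬((1 ≤ (i : ℕ) + 1 ∧ (i : ℕ) + 1 ≤ 1 ∧ 2 ≤ (j : ℕ) + 1 ∧ (j : ℕ) + 1 ≤ 8) ∨
          (2 ≤ (i : ℕ) + 1 ∧ (i : ℕ) + 1 ≤ 4 ∧ 5 ≤ (j : ℕ) + 1 ∧ (j : ℕ) + 1 ≤ 8) ∨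
          (5 ≤ (i : ℕ) + 1 ∧ (i : ℕ) + 1 ≤ 6 ∧ 7 ≤ (j : ℕ) + 1 ∧ (j : ℕ) + 1 ≤ 8)) →
        D i j = 0)) :
    r < 3 := by
  simpa using statement_4_general D hstd.2.1 (Matrix.ext hstd.2.2.1)
    (fun a ha ↦ (hstd.2.2.2.1 a ha).ge) (hzero.imp (fun h i j hij ↦ h i j (by decide +revert))
      fun h i j hij ↦ h i j (by decide +revert))
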